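/- arXiv:math/9910155 — 4 statements merged into one kernel-verified Lean document; each statement's English description precedes it below -/
import Mathlib

section
/- Let S be a numerical semigroup with conductor c, let e ∈ S∖{0}, and let N be the residue mod e for which a_N = max{a_0, …, a_{e−1}} in the Apéry set of S relative to e. Then S is symmetric if and only if a_i + a_{(N−i) mod e} = a_N for every residue i mod e. -/
/-!
Two facts about the Apéry set `a_i` carry the proof. Membership is a threshold condition within each
residue class: an integer `r ≡ a_i (mod e)` lies in `S` iff `a_i ≤ r` (`memZ_iff_apery_le`). Hence
the largest integer outside `S` is `c - 1 = a_N - e` (`conductorNS_add`), which also covers `S = ℕ`,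
where both sides are `-1`.

If `S` is symmetric, then `a_i - e ∉ S` gives `a_N - a_i ∈ S`, so `a_{N-i} ≤ a_N - a_i`; the reverse
inequality holds because `a_i + a_{N-i}` is an element of `S` in the class of `N`. Conversely, given
`a_i + a_{N-i} = a_N` and `r ≡ i`, the condition `c - 1 - r ∈ S` reads `a_{N-i} ≤ a_N - e - r`, that
is `r ≤ a_i - e`, which is equivalent to `r < a_i`, that is to `r ∉ S`.
-/

/-- A numerical semigroup: a subset of ℕ containing 0, closed under addition,
with finite complement in ℕ. -/
def IsNumericalSemigroup (S : Set ℕ) : Prop :=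
  0 ∈ S ∧ (∀ a b, a ∈ S → b ∈ S → a + b ∈ S) ∧ Sᶜ.Finite

/-- The genus of a numerical semigroup: the number of gaps. -/
noncomputable def genus (S : Set ℕ) : ℕ := Sᶜ.ncard

/-- The conductorNS: the least `c` such that every `n ≥ c` belongs to `S`. -/
noncomputable def conductorNS (S : Set ℕ) : ℕ := sInf {c | ∀ n, c ≤ n → n ∈ S}

/-- `nu S r` is the number of pairs `(a,b) ∈ S × S` with `a + b = r`. -/
noncomputable def nu (S : Set ℕ) (r : ℕ) : ℕ :=
  {p : ℕ × ℕ | p.1 ∈ S ∧ p.2 ∈ S ∧ p.1 + p.2 = r}.ncard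

/-- The Feng–Rao distance: `δ_FR(m) = min {ν(r) : r ∈ S, r ≥ m}`. -/
noncomputable def deltaFR (S : Set ℕ) (m : ℕ) : ℕ :=
  sInf (nu S '' {r | r ∈ S ∧ m ≤ r})

/-- Membership of an integer in a subset of ℕ (negative integers never belong). -/
def memZ (S : Set ℕ) (r : ℤ) : Prop := 0 ≤ r ∧ r.toNat ∈ S

/-- `S` is symmetric: for every integer `r`, `r ∈ S ↔ c - 1 - r ∉ S`. -/
def IsSymmetricNS (S : Set ℕ) : Prop :=
  ∀ r : ℤ, memZ S r ↔ ¬ memZ S ((conductorNS S : ℤ) - 1 - r)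

/-- `δ(q)`: the least integer `d ≥ 1` such that `q - d ∉ S`
(negative integers are not in `S`). -/
noncomputable def deltaGap (S : Set ℕ) (q : ℕ) : ℕ :=
  sInf {d | 1 ≤ d ∧ ¬ memZ S ((q : ℤ) - (d : ℤ))}

/-- The `i`-th Apéry element of `S` relative to `e`:
the least element of `S` congruent to `i` modulo `e`. -/
noncomputable def apery (S : Set ℕ) (e i : ℕ) : ℕ :=
  sInf {m | m ∈ S ∧ m % e = i % e}

/-- The Apéry relations `α_{i,j}` defined by `a_i + a_j = a_{(i+j) % e} + α_{i,j} * e`. -/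
noncomputable def aperyRel (S : Set ℕ) (e i j : ℕ) : ℕ :=
  (apery S e i + apery S e j - apery S e ((i + j) % e)) / e

/-- The "minimum formula" holds at `m`:
`δ_FR(m) = min {r ∈ S : r ≥ m + 1 - 2g}`. -/
def MinFormula (S : Set ℕ) (m : ℕ) : Prop :=
  deltaFR S m = sInf {r | r ∈ S ∧ (m : ℤ) + 1 - 2 * (genus S : ℤ) ≤ (r : ℤ)}

lemma apery_spec {S : Set ℕ} (hS : IsNumericalSemigroup S) {e : ℕ} (he0 : e ≠ 0) (i : ℕ) :
    apery S e i ∈ S ∧ apery S e i % e = i % e := by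
  refine Nat.sInf_mem (s := {m | m ∈ S ∧ m % e = i % e}) ?_
  obtain ⟨b, hb⟩ := hS.2.2.bddAbove
  -- `i + e * (b + 1)` exceeds every gap and is congruent to `i`.
  refine ⟨i + e * (b + 1), ?_, by simp⟩
  by_contra h
  have h1 : i + e * (b + 1) ≤ b := hb h
  have h2 : b + 1 ≤ e * (b + 1) := Nat.le_mul_of_pos_left _ (Nat.pos_of_ne_zero he0)
  omega

lemma add_mul_mem {S : Set ℕ} (hS : IsNumericalSemigroup S) {e : ℕ} (he : e ∈ S)
    {m : ℕ} (hm : m ∈ S) (k : ℕ) : m + e * k ∈ S := by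
  induction k with
  | zero => simpa using hm
  | succ k ih => rw [Nat.mul_succ, ← Nat.add_assoc]; exact hS.2.1 _ _ ih he

lemma apery_dvd {S : Set ℕ} (hS : IsNumericalSemigroup S) {e : ℕ} (he0 : e ≠ 0) (i : ℕ) :
    (e : ℤ) ∣ (apery S e i : ℤ) - i := by
  have h : i ≡ apery S e i [MOD e] := (apery_spec hS he0 i).2.symm
  exact Nat.modEq_iff_dvd.mp h

/-- Within the residue class of `i`, the elements of `S` are exactly the integers from the Apéry
element `a_i` on. -/
lemma memZ_iff_apery_le {S : Set ℕ} (hS : IsNumericalSemigroup S) {e : ℕ} (he : e ∈ S)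
    (he0 : e ≠ 0) (i : ℕ) {r : ℤ} (hr : (e : ℤ) ∣ r - i) :
    memZ S r ↔ (apery S e i : ℤ) ≤ r := by
  have hd : (e : ℤ) ∣ r - apery S e i := by
    have := dvd_sub hr (apery_dvd hS he0 i)
    rwa [sub_sub_sub_cancel_right] at this
  constructor
  · rintro ⟨h0, hm⟩
    lift r to ℕ using h0
    have hmod : i ≡ r [MOD e] := Nat.modEq_iff_dvd.mpr hr
    exact_mod_cast Nat.sInf_le (s := {m | m ∈ S ∧ m % e = i % e}) ⟨by simpa using hm, hmod.symm⟩
  · intro h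
    have h0 : 0 ≤ r := le_trans (by positivity) h
    refine ⟨h0, ?_⟩
    lift r to ℕ using h0
    have hle : apery S e i ≤ r := by exact_mod_cast h
    have hd' : e ∣ r - apery S e i := by
      rw [← Nat.cast_sub hle] at hd
      exact_mod_cast hd
    obtain ⟨k, hk⟩ := hd'
    have : r = apery S e i + e * k := by omega
    rw [Int.toNat_natCast, this]
    exact add_mul_mem hS he (apery_spec hS he0 i).1 k

/-- Two congruent integers modulo `e` that are distinct differ by at least `e`. -/
lemma add_le_of_lt_of_dvd {e : ℕ} {r s : ℤ} (hd : (e : ℤ) ∣ r - s) (h : r < s) : r + e ≤ s := by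
  have := Int.le_of_dvd (by omega) ((dvd_sub_comm).mp hd)
  omega

/-- The largest integer outside `S` is `a_N - e`, stated without subtraction as
`c + e = a_N + 1`. -/
lemma conductorNS_add {S : Set ℕ} (hS : IsNumericalSemigroup S) {e : ℕ} (he : e ∈ S)
    (he0 : e ≠ 0) {N : ℕ} (hmax : ∀ i < e, apery S e i ≤ apery S e N) :
    conductorNS S + e = apery S e N + 1 := by
  have hlb : e ≤ apery S e N + 1 := by
    have h1 := hmax (e - 1) (by omega)
    have h2 := (apery_spec hS he0 (e - 1)).2
    rw [Nat.mod_eq_of_lt (by omega : e - 1 < e)] at h2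
    have h3 := Nat.mod_le (apery S e (e - 1)) e
    omega
  have hc : conductorNS S = apery S e N + 1 - e := by
    apply le_antisymm
    · refine Nat.sInf_le (s := {c | ∀ n, c ≤ n → n ∈ S}) fun n hn => ?_
      have hdv : (e : ℤ) ∣ (n : ℤ) - (n % e : ℕ) :=
        Nat.modEq_iff_dvd.mp (Nat.mod_modEq n e)
      have hdA := apery_dvd hS he0 (n % e)
      suffices h : memZ S n by simpa using h.2
      rw [memZ_iff_apery_le hS he he0 (n % e) hdv]
      by_contra hlt
      have hd := dvd_sub hdv hdA
      rw [sub_sub_sub_cancel_right] at hd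
      have h1 := add_le_of_lt_of_dvd hd (not_le.mp hlt)
      have h2 := hmax (n % e) (Nat.mod_lt _ (Nat.pos_of_ne_zero he0))
      omega
    · refine le_csInf ⟨conductorNS S, Nat.sInf_mem (s := {c | ∀ n, c ≤ n → n ∈ S}) ?_⟩ ?_
      · obtain ⟨b, hb⟩ := hS.2.2.bddAbove
        refine ⟨b + 1, fun n hn => ?_⟩
        by_contra h
        have : n ≤ b := hb h
        omega
      · intro c hc
        by_contra hlt
        have hm : apery S e N - e ∈ S := hc _ (by omega)
        have hz : memZ S ((apery S e N : ℤ) - e) := by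
          refine ⟨by omega, ?_⟩
          have : ((apery S e N : ℤ) - e).toNat = apery S e N - e := by omega
          rwa [this]
        rw [memZ_iff_apery_le hS he he0 N] at hz
        · omega
        · have := dvd_sub (apery_dvd hS he0 N) (dvd_refl (e : ℤ))
          rwa [sub_right_comm] at this
  omega

/-- The residue `(N + e - i) % e` represents `N - i` modulo `e`, the natural subtraction being
exact for `i < e`. -/
lemma compl_residue_dvd {e N i : ℕ} (hi : i < e) :
    (e : ℤ) ∣ ((N + e - i) % e : ℕ) - ((N : ℤ) - i) := by
  have h : (e : ℤ) ∣ ((N + e - i) % e : ℕ) - ((N + e - i : ℕ) : ℤ) :=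
    Nat.modEq_iff_dvd.mp (Nat.mod_modEq (N + e - i) e).symm
  rw [Nat.cast_sub (by omega), Nat.cast_add] at h
  obtain ⟨k, hk⟩ := h
  exact ⟨k + 1, by linear_combination hk⟩

/-- with `N` the residue mod `e` realizing the maximum of the Apéry set,
`S` is symmetric iff `a_i + a_{(N-i) mod e} = a_N` for every residue `i` mod `e`. -/
theorem stmt_9 (S : Set ℕ) (hS : IsNumericalSemigroup S)
    (e : ℕ) (he : e ∈ S) (he0 : e ≠ 0)
    (N : ℕ) (hN : N < e) (hmax : ∀ i < e, apery S e i ≤ apery S e N) :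
    IsSymmetricNS S ↔
      ∀ i < e, apery S e i + apery S e ((N + e - i) % e) = apery S e N := by
  have hc : (conductorNS S : ℤ) = apery S e N + 1 - e := by
    have := conductorNS_add hS he he0 hmax
    omega
  constructor
  · intro hsym i hi
    have hj := compl_residue_dvd (N := N) hi
    set j := (N + e - i) % e
    obtain ⟨x, hx⟩ := hj
    obtain ⟨y, hy⟩ := apery_dvd hS he0 i
    obtain ⟨z, hz⟩ := apery_dvd hS he0 j
    obtain ⟨w, hw⟩ := apery_dvd hS he0 N
    have hge : (apery S e N : ℤ) ≤ apery S e i + apery S e j := by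
      rw [← memZ_iff_apery_le hS he he0 N ⟨x + y + z, by linear_combination hx + hy + hz⟩]
      refine ⟨by positivity, ?_⟩
      rw [← Nat.cast_add, Int.toNat_natCast]
      exact hS.2.1 _ _ (apery_spec hS he0 i).1 (apery_spec hS he0 j).1
    have hgap : ¬ memZ S ((apery S e i : ℤ) - e) := by
      rw [memZ_iff_apery_le hS he he0 i ⟨y - 1, by linear_combination hy⟩]
      omega
    have hmem : memZ S ((apery S e N : ℤ) - apery S e i) := by
      rw [hsym, not_not] at hgap
      have h : (conductorNS S : ℤ) - 1 - (apery S e i - e) = apery S e N - apery S e i := by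
        rw [hc]; ring
      rwa [h] at hgap
    rw [memZ_iff_apery_le hS he he0 j ⟨w - y - x, by linear_combination hw - hy - hx⟩] at hmem
    omega
  · intro h r
    obtain ⟨i, hi⟩ := Int.eq_ofNat_of_zero_le (Int.emod_nonneg r (by omega : (e : ℤ) ≠ 0))
    have hie : i < e := by
      have := Int.emod_lt_of_pos r (by omega : (0 : ℤ) < e)
      omega
    have hri : (e : ℤ) ∣ r - i := by
      rw [← hi]; exact Int.dvd_self_sub_emod
    have hsum := h i hie
    have hj := compl_residue_dvd (N := N) hie
    set j := (N + e - i) % e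
    obtain ⟨x, hx⟩ := hj
    obtain ⟨y, hy⟩ := apery_dvd hS he0 i
    obtain ⟨w, hw⟩ := apery_dvd hS he0 N
    obtain ⟨v, hv⟩ := hri
    rw [memZ_iff_apery_le hS he he0 i ⟨v, hv⟩,
      memZ_iff_apery_le hS he he0 j ⟨w - 1 - v - x, by linear_combination hc + hw - hv - hx⟩]
    have hstep : r < apery S e i → r + e ≤ apery S e i :=
      add_le_of_lt_of_dvd ⟨v - y, by linear_combination hv - hy⟩
    omega
end

section
/- Let S be a symmetric numerical semigroup with genus g. For every e ∈ S∖{0}, the integer m = 2g − 1 + e belongs to S and δ_FR(m) = ν(m) = m + 1 − 2g = e. -/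
open scoped Classical in
lemma nu_eq_card (S : Set ℕ) (r : ℕ) :
    nu S r = ((Finset.HasAntidiagonal.antidiagonal r).filter (fun p => p.1 ∈ S ∧ p.2 ∈ S)).card := by
  rw [nu, ← Set.ncard_coe_finset]
  congr 1
  ext p
  simp only [Set.mem_ofPred_eq, Finset.coe_filter, Finset.HasAntidiagonal.mem_antidiagonal]
  tauto

open scoped Classical in
/-- The pairs counted by `ν(r)`, together with those having a gap as a coordinate, exhaust the
`r + 1` pairs of sum `r`. -/
lemma nu_add_card_union (S : Set ℕ) (r : ℕ) :
    nu S r + ((Finset.HasAntidiagonal.antidiagonal r).filter (fun p => p.1 ∉ S) ∪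
      (Finset.HasAntidiagonal.antidiagonal r).filter (fun p => p.2 ∉ S)).card = r + 1 := by
  rw [nu_eq_card, ← Finset.filter_or, ← Finset.Nat.card_antidiagonal r,
    ← Finset.card_filter_add_card_filter_not (s := Finset.HasAntidiagonal.antidiagonal r)
      (fun p => p.1 ∈ S ∧ p.2 ∈ S)]
  simp only [not_and_or]

open scoped Classical in
lemma card_gap_fst (S : Set ℕ) (r : ℕ) :
    ((Finset.HasAntidiagonal.antidiagonal r).filter (fun p => p.1 ∉ S)).card = (Sᶜ ∩ Set.Iic r).ncard := by
  rw [← Set.ncard_coe_finset]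
  refine Set.ncard_congr (fun p _ => p.1) ?_ ?_ ?_
  · rintro ⟨a, b⟩ h
    simp at h
    exact ⟨h.2, Set.mem_Iic.2 (by omega)⟩
  · rintro ⟨a, b⟩ ⟨a', b'⟩ h h' heq
    simp at h h' heq ⊢
    omega
  · rintro a ⟨ha, har⟩
    rw [Set.mem_Iic] at har
    exact ⟨(a, r - a), by simpa using ⟨by omega, ha⟩, rfl⟩

open scoped Classical in
lemma card_gap_snd (S : Set ℕ) (r : ℕ) :
    ((Finset.HasAntidiagonal.antidiagonal r).filter (fun p => p.2 ∉ S)).card = (Sᶜ ∩ Set.Iic r).ncard := by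
  rw [← Set.ncard_coe_finset]
  refine Set.ncard_congr (fun p _ => p.2) ?_ ?_ ?_
  · rintro ⟨a, b⟩ h
    simp at h
    exact ⟨h.2, Set.mem_Iic.2 (by omega)⟩
  · rintro ⟨a, b⟩ ⟨a', b'⟩ h h' heq
    simp at h h' heq ⊢
    omega
  · rintro b ⟨hb, hbr⟩
    rw [Set.mem_Iic] at hbr
    exact ⟨(r - b, b), by simpa using ⟨by omega, hb⟩, rfl⟩

lemma le_nu_add {S : Set ℕ} (hfin : Sᶜ.Finite) (r : ℕ) : r + 1 ≤ nu S r + 2 * genus S := by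
  classical
  have h := nu_add_card_union S r
  have hu := Finset.card_union_le ((Finset.HasAntidiagonal.antidiagonal r).filter (fun p => p.1 ∉ S))
    ((Finset.HasAntidiagonal.antidiagonal r).filter (fun p => p.2 ∉ S))
  have hg : (Sᶜ ∩ Set.Iic r).ncard ≤ genus S := Set.ncard_le_ncard Set.inter_subset_left hfin
  rw [card_gap_fst, card_gap_snd] at hu
  omega

lemma nu_add_eq {S : Set ℕ} {r : ℕ} (hle : ∀ a, a ∉ S → a ≤ r)
    (hsum : ∀ a b, a + b = r → a ∉ S → b ∈ S) : nu S r + 2 * genus S = r + 1 := by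
  classical
  have h := nu_add_card_union S r
  have hg : Sᶜ ∩ Set.Iic r = Sᶜ := Set.inter_eq_left.2 hle
  rw [Finset.card_union_of_disjoint, card_gap_fst, card_gap_snd, hg] at h
  · rw [genus]
    omega
  · refine Finset.disjoint_filter.2 fun p hp h1 h2 => h2 ?_
    exact hsum p.1 p.2 (Finset.HasAntidiagonal.mem_antidiagonal.1 hp) h1

lemma mem_of_conductorNS_le {S : Set ℕ} (hfin : Sᶜ.Finite) {n : ℕ} (hn : conductorNS S ≤ n) :
    n ∈ S := by
  -- The set defining the conductor is nonempty, so its infimum is attained.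
  have hne : {c | ∀ n, c ≤ n → n ∈ S}.Nonempty := by
    obtain ⟨N, hN⟩ := hfin.bddAbove
    refine ⟨N + 1, fun n hn => ?_⟩
    by_contra h
    have := hN h
    omega
  exact Nat.sInf_mem hne n hn

lemma memZ_natCast (S : Set ℕ) (n : ℕ) : memZ S (n : ℤ) ↔ n ∈ S := by
  simp [memZ]

lemma conductorNS_eq {S : Set ℕ} (hfin : Sᶜ.Finite) (hsym : IsSymmetricNS S) :
    conductorNS S = 2 * genus S := by
  have hgap : ∀ a, a ∉ S → a < conductorNS S := fun a ha => by
    by_contra h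
    exact ha (mem_of_conductorNS_le hfin (not_lt.1 h))
  rcases Nat.eq_zero_or_pos (conductorNS S) with h0 | hpos
  · have : Sᶜ = ∅ := by
      ext a
      simpa using mem_of_conductorNS_le hfin (by omega : conductorNS S ≤ a)
    simp [genus, this, h0]
  · have key : ∀ a b, a + b = conductorNS S - 1 → (a ∈ S ↔ b ∉ S) := fun a b hab => by
      have h := hsym a
      rwa [show (conductorNS S : ℤ) - 1 - a = (b : ℕ) by omega, memZ_natCast, memZ_natCast] at h
    have h1 := nu_add_eq (S := S) (r := conductorNS S - 1)
      (fun a ha => by have := hgap a ha; omega)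
      (fun a b hab ha => by have := key a b hab; tauto)
    have h2 : nu S (conductorNS S - 1) = 0 := by
      rw [nu]
      convert Set.ncard_empty (ℕ × ℕ)
      ext p
      simp only [Set.mem_ofPred_eq, Set.mem_empty_iff_false, iff_false]
      rintro ⟨ha, hb, hab⟩
      exact (key _ _ hab).1 ha hb
    omega

/-- for a symmetric numerical semigroup `S` with genus `g` and every
`e ∈ S∖{0}`, the integer `m = 2g - 1 + e` belongs to `S` and
`δ_FR(m) = ν(m) = m + 1 - 2g = e`. -/
theorem stmt_10 (S : Set ℕ) (hS : IsNumericalSemigroup S) (hsym : IsSymmetricNS S)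
    (e : ℕ) (he : e ∈ S) (he0 : e ≠ 0)
    (m : ℕ) (hm : (m : ℤ) = 2 * (genus S : ℤ) - 1 + (e : ℤ)) :
    m ∈ S ∧ deltaFR S m = e ∧ nu S m = e ∧
      (m : ℤ) + 1 - 2 * (genus S : ℤ) = (e : ℤ) := by
  obtain ⟨-, hadd, hfin⟩ := hS
  have hc := conductorNS_eq hfin hsym
  have hmS : m ∈ S := mem_of_conductorNS_le hfin (by omega)
  have hnu : nu S m + 2 * genus S = m + 1 := by
    refine nu_add_eq (fun a ha => ?_) (fun a b hab ha => ?_)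
    · by_contra h
      exact ha (mem_of_conductorNS_le hfin (by omega))
    · by_contra hb
      -- If `b` is a gap, then `c - 1 - b = a - e` lies in `S`, hence so does `a`.
      have h := hsym b
      rw [memZ_natCast, show (conductorNS S : ℤ) - 1 - b = a - e by omega] at h
      have hmem : memZ S ((a : ℤ) - e) := by tauto
      obtain ⟨hnn, hmem⟩ := hmem
      have := hadd _ _ hmem he
      rw [show ((a : ℤ) - e).toNat + e = a by omega] at this
      exact ha this
  have hnue : nu S m = e := by omega
  refine ⟨hmS, le_antisymm ?_ ?_, hnue, by omega⟩
  · exact Nat.sInf_le ⟨m, ⟨hmS, le_rfl⟩, hnue⟩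
  · refine le_csInf ⟨_, m, ⟨hmS, le_rfl⟩, rfl⟩ ?_
    rintro _ ⟨r, ⟨-, hr⟩, rfl⟩
    have := le_nu_add hfin r
    omega
end

section
/- Let S be a symmetric numerical semigroup with genus g and conductor c = 2g, let m ∈ S with c ≤ m ≤ 2c − 2, and set n = m − c + 1 and q = 2c − 2 − m. Then the minimum formula holds at m in each of the following cases: (a) n ∈ S; (b) n ∉ S and δ = n′ − n ≤ 2, where n′ = min{s ∈ S : s > n}; (c) n ∉ S, δ = 3, and q is not an irreducible element of S, i.e. q = a + b for some nonzero a, b ∈ S. -/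
/-- The gaps `a ≤ r` of `S` whose complement `r - a` is a gap too. -/
def gapPairs (S : Set ℕ) (r : ℕ) : Set ℕ := {a | a ≤ r ∧ a ∉ S ∧ r - a ∉ S}

theorem mem_of_conductorNS_le_s14 {S : Set ℕ} (hS : IsNumericalSemigroup S) :
    ∀ x, conductorNS S ≤ x → x ∈ S := by
  have hne : {c | ∀ n, c ≤ n → n ∈ S}.Nonempty := by
    obtain ⟨b, hb⟩ := hS.2.2.bddAbove
    refine ⟨b + 1, fun x hx => ?_⟩
    by_contra h
    have := hb h
    omega
  exact Nat.sInf_mem hne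

theorem symm_nat {S : Set ℕ} (hsym : IsSymmetricNS S) {a b : ℕ}
    (hab : a + b + 1 = conductorNS S) : a ∈ S ↔ b ∉ S := by
  have h := hsym a
  have e : (conductorNS S : ℤ) - 1 - a = (b : ℤ) := by omega
  rw [e] at h
  simpa [memZ] using h

theorem finite_gapPairs (S : Set ℕ) (r : ℕ) : (gapPairs S r).Finite :=
  (Set.finite_Iic r).subset fun _ h => h.1

/-- Inclusion–exclusion in `[0, r]` for the gaps and their reflections `a ↦ r - a`. -/
theorem nu_add_two_genus {S : Set ℕ} (hS : IsNumericalSemigroup S) {r : ℕ}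
    (hr : conductorNS S ≤ r + 1) :
    nu S r + 2 * genus S = r + 1 + (gapPairs S r).ncard := by
  classical
  have hbig := mem_of_conductorNS_le_s14 hS
  have hle : ∀ a, a ∉ S → a ≤ r := fun a ha => by
    by_contra h
    exact ha (hbig a (by omega))
  set G : Finset ℕ := (Finset.range (r + 1)).filter (· ∉ S) with hG
  set G' : Finset ℕ := (Finset.range (r + 1)).filter (fun a => r - a ∉ S) with hG'
  have h1 : genus S = G.card := by
    rw [genus, ← Set.ncard_coe_finset]
    congr 1
    ext a
    simp only [hG, Set.mem_compl_iff, Finset.coe_filter, Finset.mem_range, Set.mem_ofPred_eq]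
    exact ⟨fun h => ⟨by have := hle a h; omega, h⟩, fun h => h.2⟩
  have h2 : G'.card = G.card := by
    refine Finset.card_bij' (fun a _ => r - a) (fun a _ => r - a) ?_ ?_ ?_ ?_
    · intro a ha
      simp only [hG, hG', Finset.mem_filter, Finset.mem_range] at ha ⊢
      exact ⟨by omega, ha.2⟩
    · intro a ha
      simp only [hG, hG', Finset.mem_filter, Finset.mem_range] at ha ⊢
      refine ⟨by omega, ?_⟩
      rw [Nat.sub_sub_self (by omega)]
      exact ha.2
    · intro a ha
      simp only [hG', Finset.mem_filter, Finset.mem_range] at ha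
      omega
    · intro a ha
      simp only [hG, Finset.mem_filter, Finset.mem_range] at ha
      omega
  have h3 : (gapPairs S r).ncard = (G ∩ G').card := by
    rw [← Set.ncard_coe_finset]
    congr 1
    ext a
    simp only [gapPairs, hG, hG', Finset.coe_inter, Finset.coe_filter, Finset.mem_range,
      Set.mem_inter_iff, Set.mem_ofPred_eq, Nat.lt_succ_iff]
    tauto
  have h4 : nu S r = (Finset.range (r + 1) \ (G ∪ G')).card := by
    have himg : {p : ℕ × ℕ | p.1 ∈ S ∧ p.2 ∈ S ∧ p.1 + p.2 = r} =
        (fun a => (a, r - a)) '' ((Finset.range (r + 1) \ (G ∪ G') : Finset ℕ) : Set ℕ) := by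
      ext ⟨a, b⟩
      simp only [hG, hG', Set.mem_ofPred_eq, Set.mem_image, Finset.mem_coe, Finset.mem_sdiff,
        Finset.mem_union, Finset.mem_filter, Finset.mem_range, Prod.mk.injEq]
      constructor
      · rintro ⟨ha, hb, rfl⟩
        exact ⟨a, ⟨by omega, by simp [ha, hb]⟩, rfl, by omega⟩
      · rintro ⟨x, ⟨hx, hx'⟩, rfl, rfl⟩
        refine ⟨?_, ?_, by omega⟩ <;> by_contra h <;> exact hx' (by tauto)
    rw [nu, himg, Set.ncard_image_of_injective _ (fun a b h => (Prod.mk.inj h).1),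
      Set.ncard_coe_finset]
  have h5 : G ∪ G' ⊆ Finset.range (r + 1) :=
    Finset.union_subset (Finset.filter_subset _ _) (Finset.filter_subset _ _)
  have h6 := Finset.card_sdiff_add_card_eq_card h5
  have h7 := Finset.card_union_add_card_inter G G'
  rw [Finset.card_range] at h6
  omega

/-- A decomposition `s + t = c - 1 - k` in `S` yields the gap pair `c - 1 - s`, `c - 1 - t`. -/
theorem mem_gapPairs {S : Set ℕ} (hsym : IsSymmetricNS S) {k s t : ℕ}
    (hs : s ∈ S) (ht : t ∈ S) (h : s + t + k + 1 = conductorNS S) :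
    t + k ∈ gapPairs S (conductorNS S - 1 + k) := by
  refine ⟨by omega, (symm_nat hsym (by omega)).1 hs, ?_⟩
  have e : conductorNS S - 1 + k - (t + k) = s + k := by omega
  rw [e]
  exact (symm_nat hsym (by omega)).1 ht

/-- No gap pairs at `c - 1 + N` when `N ∈ S`: if `a` is a gap, then `c - 1 - a ∈ S`, hence
`c - 1 + N - a ∈ S`. -/
theorem gapPairs_eq_empty {S : Set ℕ} (hS : IsNumericalSemigroup S) (hsym : IsSymmetricNS S)
    {N : ℕ} (hN : N ∈ S) : gapPairs S (conductorNS S - 1 + N) = ∅ := by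
  rw [Set.eq_empty_iff_forall_notMem]
  rintro a ⟨h1, h2, h3⟩
  have hac : a < conductorNS S := by
    by_contra h
    exact h2 (mem_of_conductorNS_le_s14 hS a (by omega))
  have h4 : conductorNS S - 1 - a ∈ S := by
    by_contra h
    exact h2 ((symm_nat hsym (by omega)).2 h)
  have h5 := hS.2.1 _ _ h4 hN
  have e : conductorNS S - 1 - a + N = conductorNS S - 1 + N - a := by omega
  exact h3 (e ▸ h5)

/-- The minimum formula at `m = c - 1 + n`, reduced to lower bounds on the number of gap pairs at
`c - 1 + k` for `n ≤ k < N`: at `k = N` the value `ν = N` is attained, and `ν(c - 1 + k) ≥ k`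
always. -/
theorem minFormula_of_bound {S : Set ℕ} (hS : IsNumericalSemigroup S) (hsym : IsSymmetricNS S)
    (hcg : conductorNS S = 2 * genus S) (hc1 : 1 ≤ conductorNS S) {m n N : ℕ} (hn1 : 1 ≤ n)
    (hmn : m = conductorNS S - 1 + n) (hNS : N ∈ S) (hnN : n ≤ N)
    (hmin : ∀ s ∈ S, n ≤ s → N ≤ s)
    (hb : ∀ k, n ≤ k → k < N → N ≤ k + (gapPairs S (conductorNS S - 1 + k)).ncard) :
    MinFormula S m := by
  have hnu : ∀ k, nu S (conductorNS S - 1 + k) =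
      k + (gapPairs S (conductorNS S - 1 + k)).ncard := fun k => by
    have := nu_add_two_genus hS (r := conductorNS S - 1 + k) (by omega)
    omega
  have h1 : IsLeast (nu S '' {r | r ∈ S ∧ m ≤ r}) N := by
    constructor
    · refine ⟨conductorNS S - 1 + N, ⟨mem_of_conductorNS_le_s14 hS _ (by omega), by omega⟩, ?_⟩
      rw [hnu, gapPairs_eq_empty hS hsym hNS]
      simp
    · rintro _ ⟨r, ⟨-, hr⟩, rfl⟩
      obtain ⟨k, rfl⟩ : ∃ k, r = conductorNS S - 1 + k := ⟨r - (conductorNS S - 1), by omega⟩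
      rw [hnu]
      by_cases hk : k < N
      · exact hb k (by omega) hk
      · omega
  have h2 : IsLeast {r | r ∈ S ∧ (m : ℤ) + 1 - 2 * (genus S : ℤ) ≤ (r : ℤ)} N :=
    ⟨⟨hNS, by omega⟩, fun s hs => hmin s hs.1 (by have := hs.2; omega)⟩
  rw [MinFormula, deltaFR, h1.csInf_eq, h2.csInf_eq]

/-- for symmetric `S` with `c = 2g`, `m ∈ S` with `c ≤ m ≤ 2c-2`,
`n = m-c+1`, `q = 2c-2-m` and `n' = min {s ∈ S : s > n}`, the minimum formula
holds at `m` in each of the following cases: (a) `n ∈ S`; (b) `n ∉ S` and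
`δ = n' - n ≤ 2`; (c) `n ∉ S`, `δ = 3` and `q` is not irreducible in `S`. -/
theorem stmt_14 (S : Set ℕ) (hS : IsNumericalSemigroup S) (hsym : IsSymmetricNS S)
    (hcg : conductorNS S = 2 * genus S)
    (m : ℕ) (hm : m ∈ S) (hc : conductorNS S ≤ m)
    (hm2 : (m : ℤ) ≤ 2 * (conductorNS S : ℤ) - 2)
    (n q : ℕ)
    (hn : (n : ℤ) = (m : ℤ) - (conductorNS S : ℤ) + 1)
    (hq : (q : ℤ) = 2 * (conductorNS S : ℤ) - 2 - (m : ℤ))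
    (n' : ℕ) (hn' : n' = sInf {s | s ∈ S ∧ n < s})
    (hcases :
      n ∈ S ∨
      (n ∉ S ∧ n' - n ≤ 2) ∨
      (n ∉ S ∧ n' - n = 3 ∧ ∃ a b : ℕ, a ∈ S ∧ b ∈ S ∧ a ≠ 0 ∧ b ≠ 0 ∧ a + b = q)) :
    MinFormula S m := by
  have hc1 : 1 ≤ conductorNS S := by omega
  have hmn : m = conductorNS S - 1 + n := by omega
  have hqn : q + n + 1 = conductorNS S := by omega
  by_cases hnS : n ∈ S
  · exact minFormula_of_bound hS hsym hcg hc1 (by omega) hmn hnS le_rfl (fun s _ h => h)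
      (fun k h1 h2 => by omega)
  have hbig := mem_of_conductorNS_le_s14 hS
  have hmem : n' ∈ S ∧ n < n' := by
    rw [hn']
    exact Nat.sInf_mem (s := {s | s ∈ S ∧ n < s}) ⟨conductorNS S, hbig _ le_rfl, by omega⟩
  have hmin : ∀ s ∈ S, n ≤ s → n' ≤ s := fun s hs hns => by
    rw [hn']
    refine Nat.sInf_le ⟨hs, lt_of_le_of_ne hns ?_⟩
    rintro rfl
    exact hnS hs
  have hn'c : n' ≤ conductorNS S := hmin _ (hbig _ le_rfl) (by omega)
  refine minFormula_of_bound hS hsym hcg hc1 (by omega) hmn hmem.1 hmem.2.le hmin ?_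
  intro k hnk hkn
  have hkS : k ∉ S := fun h => absurd (hmin k h hnk) (by omega)
  obtain ⟨p, hp⟩ : ∃ p, p + k + 1 = conductorNS S := ⟨conductorNS S - 1 - k, by omega⟩
  have hpS : p ∈ S := (symm_nat hsym hp).2 hkS
  have hfin := finite_gapPairs S (conductorNS S - 1 + k)
  have m0 := mem_gapPairs hsym (k := k) hpS hS.1 (by omega)
  have mp := mem_gapPairs hsym (k := k) hS.1 hpS (by omega)
  have b1 : 1 ≤ (gapPairs S (conductorNS S - 1 + k)).ncard :=
    (Set.ncard_pos hfin).2 ⟨_, m0⟩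
  have b2 : p ≠ 0 → 2 ≤ (gapPairs S (conductorNS S - 1 + k)).ncard := fun hp0 => by
    rw [← Set.ncard_pair (a := 0 + k) (b := p + k) (by omega)]
    refine Set.ncard_le_ncard ?_ hfin
    rintro x (rfl | rfl)
    exacts [m0, mp]
  rcases hcases with h | ⟨-, h⟩ | ⟨-, h, a, b, ha, hb, ha0, hb0, hab⟩
  · exact absurd h hnS
  · by_cases hp0 : p = 0 <;> [skip; have := b2 hp0] <;> omega
  · by_cases hk : k = n
    · have b3 : 3 ≤ (gapPairs S (conductorNS S - 1 + k)).ncard := by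
        have ma := mem_gapPairs hsym (k := k) hb ha (by omega)
        have hcard : ({0 + k, p + k, a + k} : Set ℕ).ncard = 3 :=
          Set.ncard_eq_three.2 ⟨0 + k, p + k, a + k, by omega, by omega, by omega, rfl⟩
        rw [← hcard]
        refine Set.ncard_le_ncard ?_ hfin
        rintro x (rfl | rfl | rfl)
        exacts [m0, mp, ma]
      omega
    · by_cases hp0 : p = 0
      · -- `q ≥ 2` because `a, b ≠ 0`, so `k = c - 1` forces `k ≥ n + 2 = n' - 1`.
        omega
      · have := b2 hp0
        omega
end

section
/- Let S be a symmetric numerical semigroup with multiplicity e_0 = min(S∖{0}). If q ∈ S satisfies ν(q) < δ(q), then q ≥ e_0 + 2. Moreover, there exists q ∈ S with ν(q) < δ(q) whose least value equals e_0 + 2 if and only if e_0 > 2 and e_0 + 1, e_0 + 2 ∈ S. -/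
theorem nuSet_finite (S : Set ℕ) (r : ℕ) :
    {p : ℕ × ℕ | p.1 ∈ S ∧ p.2 ∈ S ∧ p.1 + p.2 = r}.Finite :=
  (Finset.HasAntidiagonal.antidiagonal r).finite_toSet.subset fun p hp => by
    simpa using hp.2.2

theorem card_le_nu {S : Set ℕ} {r : ℕ} (t : Finset (ℕ × ℕ))
    (ht : ∀ p ∈ t, p.1 ∈ S ∧ p.2 ∈ S ∧ p.1 + p.2 = r) : t.card ≤ nu S r := by
  rw [← Set.ncard_coe_finset]
  exact Set.ncard_le_ncard (fun p hp => ht p (by exact_mod_cast hp)) (nuSet_finite S r)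

theorem two_le_nu {S : Set ℕ} (h0 : 0 ∈ S) {q : ℕ} (hq : q ∈ S) (hpos : 0 < q) :
    2 ≤ nu S q := by
  have h := card_le_nu (S := S) (r := q) {(0, q), (q, 0)} (by simp [h0, hq])
  rwa [Finset.card_pair (by simp; omega)] at h

/-- A gap at distance `d` below `q` bounds `δ(q)`. The case `q < d`, where the integer `q - d` is
negative, is listed apart because the subtraction in `q - d ∉ S` is truncated. -/
theorem deltaGap_le {S : Set ℕ} {q d : ℕ} (hd : 1 ≤ d) (h : q < d ∨ q - d ∉ S) :
    deltaGap S q ≤ d := by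
  refine Nat.sInf_le ⟨hd, fun hm => ?_⟩
  obtain ⟨h1, h2⟩ := hm
  have h3 : ((q : ℤ) - d).toNat = q - d := by omega
  rw [h3] at h2
  rcases h with h | h
  · omega
  · exact h h2

theorem not_nu_lt_of_one_mem {S : Set ℕ} (hS : IsNumericalSemigroup S) (h1 : 1 ∈ S) (q : ℕ) :
    ¬ nu S q < deltaGap S q := by
  have hall : ∀ n, n ∈ S := by
    intro n
    induction n with
    | zero => exact hS.1
    | succ n ih => exact hS.2.1 _ _ ih h1
  have h := card_le_nu (S := S) (r := q) (Finset.HasAntidiagonal.antidiagonal q)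
    (fun p hp => ⟨hall _, hall _, by simpa using hp⟩)
  rw [Finset.Nat.card_antidiagonal] at h
  have := deltaGap_le (S := S) (q := q) (d := q + 1) (by omega) (by omega)
  omega

/-- for symmetric `S` with multiplicity `e₀`: every `q ∈ S` with
`ν(q) < δ(q)` satisfies `q ≥ e₀ + 2`; and such a `q` exists with least value
exactly `e₀ + 2` iff `e₀ > 2` and `e₀ + 1, e₀ + 2 ∈ S`. -/
theorem stmt_17 (S : Set ℕ) (hS : IsNumericalSemigroup S) (hsym : IsSymmetricNS S)
    (e₀ : ℕ) (he₀ : e₀ = sInf (S \ {0})) :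
    (∀ q ∈ S, nu S q < deltaGap S q → e₀ + 2 ≤ q) ∧
      (((∃ q, q ∈ S ∧ nu S q < deltaGap S q) ∧
          sInf {q | q ∈ S ∧ nu S q < deltaGap S q} = e₀ + 2)
        ↔ (2 < e₀ ∧ e₀ + 1 ∈ S ∧ e₀ + 2 ∈ S)) := by
  have hne : (S \ {0}).Nonempty := by
    have hinf : S.Infinite := by
      have := hS.2.2.infinite_compl
      rwa [compl_compl] at this
    exact (hinf.sdiff (Set.finite_singleton 0)).nonempty
  have hmem : e₀ ∈ S \ {0} := he₀ ▸ Nat.sInf_mem hne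
  have heS : e₀ ∈ S := hmem.1
  have hepos : 0 < e₀ := Nat.pos_of_ne_zero (by simpa using hmem.2)
  have hmin : ∀ n ∈ S, n ≠ 0 → e₀ ≤ n := fun n hn h0 => he₀ ▸ Nat.sInf_le ⟨hn, by simpa using h0⟩
  have hgap : 2 ≤ e₀ → e₀ - 1 ∉ S := fun h hn => by
    have := hmin _ hn (by omega)
    omega
  have hfirst : ∀ q ∈ S, nu S q < deltaGap S q → e₀ + 2 ≤ q := by
    intro q hq hlt
    by_contra hcon
    rcases Nat.lt_or_ge e₀ 2 with h | h
    · obtain rfl : e₀ = 1 := by omega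
      exact not_nu_lt_of_one_mem hS heS q hlt
    rcases Nat.eq_zero_or_pos q with rfl | hpos
    · have h1 := card_le_nu (S := S) (r := 0) {(0, 0)} (by simp [hS.1])
      have h2 := deltaGap_le (S := S) (q := 0) (d := 1) le_rfl (by omega)
      simp at h1
      omega
    · have h1 := two_le_nu hS.1 hq hpos
      have h2 := hmin q hq (by omega)
      -- the gap `e₀ - 1` is at distance `1` or `2` below `q`
      have h3 := deltaGap_le (S := S) (q := q) (d := q - (e₀ - 1)) (by omega)
        (Or.inr (by rw [show q - (q - (e₀ - 1)) = e₀ - 1 by omega]; exact hgap h))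
      omega
  refine ⟨hfirst, ?_, ?_⟩
  · rintro ⟨hex, hinf⟩
    have hm : e₀ + 2 ∈ {q | q ∈ S ∧ nu S q < deltaGap S q} := hinf ▸ Nat.sInf_mem hex
    obtain ⟨hq, hlt⟩ := hm
    have h2 := two_le_nu hS.1 hq (by omega)
    refine ⟨?_, ?_, hq⟩
    · by_contra hcon
      obtain rfl | rfl : e₀ = 1 ∨ e₀ = 2 := by omega
      · exact not_nu_lt_of_one_mem hS heS _ hlt
      · have h3 := card_le_nu (S := S) (r := 4) {(0, 4), (2, 2), (4, 0)}
          (by simp [hS.1, heS, show 4 ∈ S from hq])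
        have h4 := deltaGap_le (S := S) (q := 4) (d := 3) (by omega) (Or.inr (hgap le_rfl))
        simp at h3 hlt
        omega
    · by_contra hcon
      have := deltaGap_le (S := S) (q := e₀ + 2) (d := 1) le_rfl (Or.inr hcon)
      omega
  · rintro ⟨h2, hS1, hS2⟩
    have hnu : nu S (e₀ + 2) ≤ 2 := by
      have hsub : {p : ℕ × ℕ | p.1 ∈ S ∧ p.2 ∈ S ∧ p.1 + p.2 = e₀ + 2} ⊆
          {(0, e₀ + 2), (e₀ + 2, 0)} := by
        rintro ⟨a, b⟩ ⟨ha, hb, hab⟩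
        simp only at ha hb hab
        have ha' := hmin a ha
        have hb' := hmin b hb
        simp only [Set.mem_insert_iff, Set.mem_singleton_iff, Prod.mk.injEq]
        omega
      exact (Set.ncard_le_ncard hsub (Set.toFinite _)).trans ((Set.ncard_insert_le _ _).trans (by simp))
    have hdel : 3 ≤ deltaGap S (e₀ + 2) := by
      -- `sInf ∅ = 0` in `ℕ`, so nonemptiness of the defining set is needed
      refine le_csInf ⟨e₀ + 3, by omega, fun h => ?_⟩ ?_
      · have := h.1
        push_cast at this
        omega
      · rintro d ⟨hd, hn⟩
        by_contra hcon
        obtain rfl | rfl : d = 1 ∨ d = 2 := by omega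
        · exact hn ⟨by push_cast; omega, by
            rwa [show (((e₀ + 2 : ℕ) : ℤ) - (1 : ℕ)).toNat = e₀ + 1 by omega]⟩
        · exact hn ⟨by push_cast; omega, by
            rwa [show (((e₀ + 2 : ℕ) : ℤ) - (2 : ℕ)).toNat = e₀ by omega]⟩
    have hin : e₀ + 2 ∈ {q | q ∈ S ∧ nu S q < deltaGap S q} := ⟨hS2, by omega⟩
    exact ⟨⟨_, hin⟩, le_antisymm (Nat.sInf_le hin)
      (le_csInf ⟨_, hin⟩ fun q hq => hfirst q hq.1 hq.2)⟩
end
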